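/- A density matrix ρ on ℂ^m ⊗ ℂ^n is separable if and only if Tr(Aρ) ≥ 0 for every Hermitian mn×mn matrix A satisfying Tr(A(P ⊗ Q)) ≥ 0 for all orthogonal projections P on ℂ^m and Q on ℂ^n. Equivalently: ρ is entangled if and only if there exists an entanglement witness for it, i.e., a Hermitian matrix A with nonnegative expectation value Tr(Aσ) ≥ 0 on every separable density matrix σ but Tr(Aρ) < 0 (Horodecki, via the separating-hyperplane theorem). -/

import Mathlib

open scoped ComplexOrder Kronecker

noncomputable section

/-- A density matrix: positive semidefinite with trace one. -/
def IsDensity {ι : Type*} [Fintype ι] (ρ : Matrix ι ι ℂ) : Prop :=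
  ρ.PosSemidef ∧ ρ.trace = 1

/-- A separable state: a finite convex combination of tensor products of density
matrices; a non-separable density matrix is entangled. -/
def Separable {m n : ℕ} (ρ : Matrix (Fin m × Fin n) (Fin m × Fin n) ℂ) : Prop :=
  ∃ (k : ℕ) (lam : Fin k → ℝ) (ρ1 : Fin k → Matrix (Fin m) (Fin m) ℂ)
    (ρ2 : Fin k → Matrix (Fin n) (Fin n) ℂ),
    (∀ i, 0 ≤ lam i) ∧ (∑ i, lam i = 1) ∧
    (∀ i, IsDensity (ρ1 i)) ∧ (∀ i, IsDensity (ρ2 i)) ∧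
    ρ = ∑ i, (lam i : ℂ) • (ρ1 i ⊗ₖ ρ2 i)

/-- An orthogonal projection: Hermitian and idempotent. -/
def IsProjection {ι : Type*} [Fintype ι] (P : Matrix ι ι ℂ) : Prop :=
  P.IsHermitian ∧ P * P = P

/-!
The separable states are the convex hull of the products of pure states. The pure states form a
compact set, so by Carathéodory's theorem this hull is compact, and Hahn–Banach separates any other
Hermitian matrix `ρ` of trace one from it by a functional `X ↦ Re Tr(A₀X)`. Neither replacing `A₀`
by its Hermitian part nor subtracting a multiple of the identity spoils the separation of such
matrices, and after a suitable such change the separating value is `0`. A pure state is a rank-one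
projection and a nonzero projection is a positive multiple of a state, so nonnegativity of `Tr(Aσ)`
on separable states amounts to nonnegativity on products of projections.
-/

section ConvexHull

theorem image2_convexHull_subset {𝕜 E F G : Type*} [CommSemiring 𝕜] [PartialOrder 𝕜]
    [AddCommMonoid E] [Module 𝕜 E] [AddCommMonoid F] [Module 𝕜 F] [AddCommMonoid G] [Module 𝕜 G]
    (B : E →ₗ[𝕜] F →ₗ[𝕜] G) (s : Set E) (t : Set F) :
    Set.image2 (fun x y ↦ B x y) (convexHull 𝕜 s) (convexHull 𝕜 t) ⊆
      convexHull 𝕜 (Set.image2 (fun x y ↦ B x y) s t) := by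
  set K := convexHull 𝕜 (Set.image2 (fun x y ↦ B x y) s t)
  have hK : Convex 𝕜 K := convex_convexHull 𝕜 _
  have left_mem : ∀ y ∈ t, convexHull 𝕜 s ⊆ B.flip y ⁻¹' K := fun y hy ↦
    convexHull_min (fun x hx ↦ subset_convexHull 𝕜 _ (Set.mem_image2_of_mem hx hy))
      (hK.linear_preimage (B.flip y))
  have right_mem : ∀ x ∈ convexHull 𝕜 s, convexHull 𝕜 t ⊆ B x ⁻¹' K := fun x hx ↦
    convexHull_min (fun y hy ↦ left_mem y hy hx) (hK.linear_preimage (B x))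
  rintro _ ⟨x, hx, y, hy, rfl⟩
  exact right_mem x hx hy

variable {𝕜 E : Type*} [Field 𝕜] [LinearOrder 𝕜] [IsStrictOrderedRing 𝕜] [AddCommGroup E]
  [Module 𝕜 E] [FiniteDimensional 𝕜 E]

theorem convexHull_eq_iUnion_image_stdSimplex (s : Set E) :
    convexHull 𝕜 s = ⋃ k : Fin (Module.finrank 𝕜 E + 2),
      (fun p : (Fin k → 𝕜) × (Fin k → E) ↦ ∑ j, p.1 j • p.2 j) ''
        (stdSimplex 𝕜 (Fin k) ×ˢ Set.univ.pi fun _ ↦ s) := by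
  refine Set.Subset.antisymm (fun x hx ↦ ?_) (Set.iUnion_subset fun k ↦ ?_)
  · obtain ⟨ι, _, z, w, hz, hind, hw, hw_sum, rfl⟩ := eq_pos_convex_span_of_mem_convexHull hx
    have hcard : Fintype.card ι < Module.finrank 𝕜 E + 2 := by
      have := hind.card_le_finrank_succ
      have := (vectorSpan 𝕜 (Set.range z)).finrank_le
      omega
    let e := (Fintype.equivFin ι).symm
    exact Set.mem_iUnion.2 ⟨⟨Fintype.card ι, hcard⟩, (w ∘ e, z ∘ e),
      ⟨⟨fun j ↦ (hw (e j)).le, (e.sum_comp w).trans hw_sum⟩,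
        fun j _ ↦ hz (Set.mem_range_self (e j))⟩, e.sum_comp fun i ↦ w i • z i⟩
  · rintro _ ⟨⟨w, z⟩, ⟨⟨hw, hw_sum⟩, hz⟩, rfl⟩
    exact mem_convexHull_of_exists_fintype w z hw hw_sum (fun i ↦ hz i trivial) rfl

theorem isCompact_convexHull [TopologicalSpace 𝕜] [OrderClosedTopology 𝕜] [CompactIccSpace 𝕜]
    [ContinuousAdd 𝕜] [TopologicalSpace E] [ContinuousAdd E] [ContinuousSMul 𝕜 E]
    {s : Set E} (hs : IsCompact s) : IsCompact (convexHull 𝕜 s) := by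
  rw [convexHull_eq_iUnion_image_stdSimplex]
  exact isCompact_iUnion fun k ↦
    ((isCompact_stdSimplex 𝕜 _).prod (isCompact_univ_pi fun _ ↦ hs)).image (by fun_prop)

end ConvexHull

section Expectation

open Matrix ComplexStarModule

theorem exists_trace_mul_eq {R m n : Type*} [CommSemiring R] [Fintype m] [Fintype n]
    (f : Matrix m n R →ₗ[R] R) : ∃ A : Matrix n m R, ∀ X, (A * X).trace = f X := by
  classical
  let A : Matrix n m R := of fun j i ↦ f (single i j 1)
  suffices traceLinearMap n R R ∘ₗ mulLeftLinearMap n R A = f from ⟨A, LinearMap.congr_fun this⟩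
  refine ext_linearMap _ fun i j ↦ LinearMap.ext_ring ?_
  simp [A, trace_mul_single]

variable {ι : Type*} [Fintype ι]

/-- The expectation value `Re Tr(AX)` of the observable `A`, as a real-linear functional of `X`.
For Hermitian `A` and `X` the trace is real, so nothing is lost by taking its real part. -/
def expectation (A : Matrix ι ι ℂ) : Matrix ι ι ℂ →ₗ[ℝ] ℝ :=
  Complex.reLm ∘ₗ (traceLinearMap ι ℂ ℂ).restrictScalars ℝ ∘ₗ LinearMap.mulLeft ℝ A

theorem expectation_apply (A X : Matrix ι ι ℂ) : expectation A X = (A * X).trace.re := rfl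

theorem convex_setOfPred_expectation_nonneg (A : Matrix ι ι ℂ) :
    Convex ℝ {X | 0 ≤ expectation A X} :=
  (convex_Ici 0).linear_preimage (expectation A)

theorem expectation_conjTranspose (A : Matrix ι ι ℂ) {X : Matrix ι ι ℂ} (hX : X.IsHermitian) :
    expectation Aᴴ X = expectation A X := by
  have htrace : (Aᴴ * X).trace = star (A * X).trace := by
    rw [← trace_conjTranspose, conjTranspose_mul, hX.eq, trace_mul_comm]
  simp [expectation_apply, htrace]

theorem expectation_realPart (A : Matrix ι ι ℂ) {X : Matrix ι ι ℂ} (hX : X.IsHermitian) :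
    expectation (ℜ A : Matrix ι ι ℂ) X = expectation A X := by
  have hconj := expectation_conjTranspose A hX
  simp only [expectation_apply] at hconj ⊢
  rw [realPart_apply_coe, star_eq_conjTranspose, smul_mul, add_mul, trace_smul, trace_add,
    Complex.smul_re, Complex.add_re, hconj, smul_eq_mul]
  ring

theorem expectation_sub_smul_one [DecidableEq ι] (A : Matrix ι ι ℂ) (u : ℝ) {X : Matrix ι ι ℂ}
    (hX : X.trace = 1) : expectation (A - u • 1) X = expectation A X - u := by
  simp [expectation_apply, sub_mul, hX]

theorem exists_isHermitian_expectation_neg {K : Set (Matrix ι ι ℂ)} (hK : Convex ℝ K)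
    (hK_closed : IsClosed K) (hK_herm : ∀ σ ∈ K, σ.IsHermitian) (hK_trace : ∀ σ ∈ K, σ.trace = 1)
    {ρ : Matrix ι ι ℂ} (hρ : ρ.IsHermitian) (hρ_trace : ρ.trace = 1) (hρK : ρ ∉ K) :
    ∃ A : Matrix ι ι ℂ, A.IsHermitian ∧ (∀ σ ∈ K, 0 ≤ expectation A σ) ∧ expectation A ρ < 0 := by
  classical
  have : LocallyConvexSpace ℝ (Matrix ι ι ℂ) := inferInstanceAs (LocallyConvexSpace ℝ (ι → ι → ℂ))
  obtain ⟨f, u, hfρ, hfK⟩ :=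
    RCLike.geometric_hahn_banach_point_closed (𝕜 := ℂ) hK hK_closed hρK
  obtain ⟨A₀, hA₀⟩ := exists_trace_mul_eq f.toLinearMap
  let A : Matrix ι ι ℂ := (ℜ A₀ : Matrix ι ι ℂ) - u • 1
  have hA : ∀ X : Matrix ι ι ℂ, X.IsHermitian → X.trace = 1 →
      expectation A X = (f X).re - u := fun X hX hX_trace ↦ by
    rw [expectation_sub_smul_one _ u hX_trace, expectation_realPart A₀ hX, expectation_apply, hA₀]
    rfl
  refine ⟨A, (ℜ A₀).2.sub ((IsSelfAdjoint.all u).smul (.one _)), fun σ hσ ↦ ?_, ?_⟩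
  · rw [hA σ (hK_herm σ hσ) (hK_trace σ hσ)]
    exact sub_nonneg.2 (hfK σ hσ).le
  · rw [hA ρ hρ hρ_trace]
    exact sub_neg.2 hfρ

end Expectation

section States

open Matrix

theorem eq_sum_eigenvalues_smul_vecMulVec {𝕜 ι : Type*} [RCLike 𝕜] [Fintype ι]
    [DecidableEq ι] {A : Matrix ι ι 𝕜} (hA : A.IsHermitian) :
    A = ∑ i, hA.eigenvalues i •
      vecMulVec (hA.eigenvectorBasis i).ofLp (star (hA.eigenvectorBasis i).ofLp) := by
  conv_lhs => rw [hA.spectral_theorem, Unitary.conjStarAlgAut_apply]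
  ext a b
  simp [mul_apply, diagonal_apply, Matrix.sum_apply, vecMulVec_apply, RCLike.real_smul_eq_coe_mul,
    mul_comm, mul_assoc, mul_left_comm]

variable {ι κ : Type*} [Fintype ι] [Fintype κ]

/-- The pure states, i.e. the rank-one projections `v v*` onto unit vectors `v`. -/
def pureStates (ι : Type*) [Fintype ι] : Set (Matrix ι ι ℂ) :=
  (fun v : EuclideanSpace ℂ ι ↦ vecMulVec v.ofLp (star v.ofLp)) '' Metric.sphere 0 1

theorem isCompact_pureStates : IsCompact (pureStates ι) := by
  refine (isCompact_sphere _ _).image (continuous_matrix fun i j ↦ ?_)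
  simp only [vecMulVec_apply, Pi.star_apply]
  fun_prop

theorem star_dotProduct_self_of_norm_eq_one {𝕜 : Type*} [RCLike 𝕜] {v : EuclideanSpace 𝕜 ι}
    (hv : ‖v‖ = 1) : star v.ofLp ⬝ᵥ v.ofLp = 1 := by
  rw [dotProduct_comm, ← EuclideanSpace.inner_eq_star_dotProduct,
    inner_self_eq_one_of_norm_eq_one hv]

theorem isDensity_of_mem_pureStates {P : Matrix ι ι ℂ} (hP : P ∈ pureStates ι) : IsDensity P := by
  obtain ⟨v, hv, rfl⟩ := hP
  refine ⟨posSemidef_vecMulVec_self_star _, ?_⟩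
  rw [trace_vecMulVec, dotProduct_comm,
    star_dotProduct_self_of_norm_eq_one (mem_sphere_zero_iff_norm.1 hv)]

theorem isProjection_of_mem_pureStates {P : Matrix ι ι ℂ} (hP : P ∈ pureStates ι) :
    IsProjection P := by
  obtain ⟨v, hv, rfl⟩ := hP
  refine ⟨(posSemidef_vecMulVec_self_star _).isHermitian, ?_⟩
  rw [vecMulVec_mul_vecMulVec, star_dotProduct_self_of_norm_eq_one (mem_sphere_zero_iff_norm.1 hv)]
  simp

theorem convex_setOfPred_isDensity : Convex ℝ {ρ : Matrix ι ι ℂ | IsDensity ρ} := by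
  rintro ρ ⟨hρ, hρ_trace⟩ σ ⟨hσ, hσ_trace⟩ a b ha hb hab
  refine ⟨(hρ.smul ha).add (hσ.smul hb), ?_⟩
  rw [trace_add, trace_smul, trace_smul, hρ_trace, hσ_trace, ← add_smul, hab, one_smul]

theorem setOfPred_isDensity_eq_convexHull_pureStates :
    {ρ : Matrix ι ι ℂ | IsDensity ρ} = convexHull ℝ (pureStates ι) := by
  classical
  refine Set.Subset.antisymm (fun ρ hρ ↦ ?_)
    (convexHull_min (fun _ ↦ isDensity_of_mem_pureStates) convex_setOfPred_isDensity)
  have hherm := hρ.1.isHermitian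
  have hsum : ∑ i, hherm.eigenvalues i = 1 := by
    have h := hherm.trace_eq_sum_eigenvalues.symm.trans hρ.2
    rw [← RCLike.ofReal_sum] at h
    exact Complex.ofReal_injective h
  exact mem_convexHull_of_exists_fintype hherm.eigenvalues _ hρ.1.eigenvalues_nonneg hsum
    (fun i ↦ ⟨hherm.eigenvectorBasis i, by simp, rfl⟩)
    (eq_sum_eigenvalues_smul_vecMulVec hherm).symm

theorem IsDensity.kronecker {P : Matrix ι ι ℂ} {Q : Matrix κ κ ℂ} (hP : IsDensity P)
    (hQ : IsDensity Q) : IsDensity (P ⊗ₖ Q) :=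
  ⟨hP.1.kronecker hQ.1, by rw [trace_kronecker, hP.2, hQ.2, one_mul]⟩

theorem IsProjection.posSemidef {P : Matrix ι ι ℂ} (hP : IsProjection P) : P.PosSemidef := by
  have h := posSemidef_conjTranspose_mul_self P
  rwa [hP.1.eq, hP.2] at h

theorem eq_zero_or_exists_smul_isDensity {P : Matrix ι ι ℂ} (hP : P.PosSemidef) :
    P = 0 ∨ ∃ c : ℝ, 0 ≤ c ∧ ∃ ρ, IsDensity ρ ∧ P = c • ρ := by
  refine or_iff_not_imp_left.2 fun hne ↦ ?_
  obtain ⟨c, hc, htrace⟩ := RCLike.nonneg_iff_exists_ofReal.1 hP.trace_nonneg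
  have hc_ne : c ≠ 0 := by
    rintro rfl
    exact hne (hP.trace_eq_zero_iff.1 (by simpa using htrace.symm))
  refine ⟨c, hc, c⁻¹ • P, ⟨hP.smul (inv_nonneg.2 hc), ?_⟩, (smul_inv_smul₀ hc_ne P).symm⟩
  rw [trace_smul, ← htrace]
  simp [hc_ne]

end States

section Separable

open Matrix

variable {m n : ℕ}

theorem separable_iff_mem_convexHull {ρ : Matrix (Fin m × Fin n) (Fin m × Fin n) ℂ} :
    Separable ρ ↔ ρ ∈ convexHull ℝ (Set.image2 (fun P Q ↦ P ⊗ₖ Q)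
      {P : Matrix (Fin m) (Fin m) ℂ | IsDensity P}
      {Q : Matrix (Fin n) (Fin n) ℂ | IsDensity Q}) := by
  constructor
  · rintro ⟨k, w, P, Q, hw, hw_sum, hP, hQ, rfl⟩
    exact mem_convexHull_of_exists_fintype w (fun i ↦ P i ⊗ₖ Q i) hw hw_sum
      (fun i ↦ ⟨P i, hP i, Q i, hQ i, rfl⟩) rfl
  · intro hρ
    obtain ⟨ι, _, w, z, hw, hw_sum, hz, rfl⟩ := mem_convexHull_iff_exists_fintype.1 hρ
    choose P hP Q hQ hPQ using hz
    let e := (Fintype.equivFin ι).symm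
    refine ⟨Fintype.card ι, w ∘ e, P ∘ e, Q ∘ e, fun i ↦ hw (e i), (e.sum_comp w).trans hw_sum,
      fun i ↦ hP (e i), fun i ↦ hQ (e i), ?_⟩
    rw [← e.sum_comp]
    exact Finset.sum_congr rfl fun i _ ↦ by rw [← hPQ]; rfl

theorem setOfPred_separable_eq_convexHull_pureStates :
    {ρ : Matrix (Fin m × Fin n) (Fin m × Fin n) ℂ | Separable ρ} =
      convexHull ℝ (Set.image2 (fun P Q ↦ P ⊗ₖ Q) (pureStates (Fin m)) (pureStates (Fin n))) := by
  ext ρ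
  rw [Set.mem_ofPred_eq, separable_iff_mem_convexHull]
  constructor
  · rw [setOfPred_isDensity_eq_convexHull_pureStates, setOfPred_isDensity_eq_convexHull_pureStates]
    have h_apply : (fun P Q ↦ kroneckerBilinear (R := ℝ) P Q) =
        fun (P : Matrix (Fin m) (Fin m) ℂ) (Q : Matrix (Fin n) (Fin n) ℂ) ↦ P ⊗ₖ Q := rfl
    have h_subset := image2_convexHull_subset (kroneckerBilinear (R := ℝ))
      (pureStates (Fin m)) (pureStates (Fin n))
    rw [h_apply] at h_subset
    exact fun hρ ↦ convexHull_min h_subset (convex_convexHull ℝ _) hρ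
  · exact fun hρ ↦ convexHull_mono (Set.image2_subset (fun _ ↦ isDensity_of_mem_pureStates)
      fun _ ↦ isDensity_of_mem_pureStates) hρ

theorem convex_setOfPred_separable :
    Convex ℝ {ρ : Matrix (Fin m × Fin n) (Fin m × Fin n) ℂ | Separable ρ} := by
  rw [setOfPred_separable_eq_convexHull_pureStates]
  exact convex_convexHull ℝ _

theorem isCompact_setOfPred_separable :
    IsCompact {ρ : Matrix (Fin m × Fin n) (Fin m × Fin n) ℂ | Separable ρ} := by
  rw [setOfPred_separable_eq_convexHull_pureStates]
  refine isCompact_convexHull ?_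
  rw [← Set.image_prod]
  refine (isCompact_pureStates.prod isCompact_pureStates).image (continuous_matrix fun i j ↦ ?_)
  simp only [kroneckerMap_apply]
  fun_prop

theorem IsDensity.separable_kronecker {P : Matrix (Fin m) (Fin m) ℂ} {Q : Matrix (Fin n) (Fin n) ℂ}
    (hP : IsDensity P) (hQ : IsDensity Q) : Separable (P ⊗ₖ Q) :=
  separable_iff_mem_convexHull.2 (subset_convexHull ℝ _ ⟨P, hP, Q, hQ, rfl⟩)

theorem Separable.isDensity {ρ : Matrix (Fin m × Fin n) (Fin m × Fin n) ℂ} (hρ : Separable ρ) :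
    IsDensity ρ := by
  refine convexHull_min ?_ convex_setOfPred_isDensity (separable_iff_mem_convexHull.1 hρ)
  rintro _ ⟨P, hP, Q, hQ, rfl⟩
  exact IsDensity.kronecker hP hQ

theorem forall_isProjection_expectation_nonneg_iff
    {A : Matrix (Fin m × Fin n) (Fin m × Fin n) ℂ} :
    (∀ (P : Matrix (Fin m) (Fin m) ℂ) (Q : Matrix (Fin n) (Fin n) ℂ),
      IsProjection P → IsProjection Q → 0 ≤ expectation A (P ⊗ₖ Q)) ↔
      ∀ σ, Separable σ → 0 ≤ expectation A σ := by
  constructor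
  · intro h
    change {σ | Separable σ} ⊆ {σ | 0 ≤ expectation A σ}
    rw [setOfPred_separable_eq_convexHull_pureStates]
    refine convexHull_min ?_ (convex_setOfPred_expectation_nonneg A)
    rintro _ ⟨P, hP, Q, hQ, rfl⟩
    exact h P Q (isProjection_of_mem_pureStates hP) (isProjection_of_mem_pureStates hQ)
  · intro h P Q hP hQ
    obtain rfl | ⟨c, hc, ρ, hρ, rfl⟩ := eq_zero_or_exists_smul_isDensity hP.posSemidef
    · simp
    obtain rfl | ⟨d, hd, σ, hσ, rfl⟩ := eq_zero_or_exists_smul_isDensity hQ.posSemidef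
    · simp
    rw [smul_kronecker, kronecker_smul, map_smul, map_smul]
    exact smul_nonneg hc (smul_nonneg hd (h _ (hρ.separable_kronecker hσ)))

theorem exists_isHermitian_expectation_neg_of_not_separable
    {ρ : Matrix (Fin m × Fin n) (Fin m × Fin n) ℂ} (hρ : ρ.IsHermitian) (htrace : ρ.trace = 1)
    (hsep : ¬ Separable ρ) :
    ∃ A : Matrix (Fin m × Fin n) (Fin m × Fin n) ℂ, A.IsHermitian ∧
      (∀ σ, Separable σ → 0 ≤ expectation A σ) ∧ expectation A ρ < 0 :=
  exists_isHermitian_expectation_neg convex_setOfPred_separable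
    isCompact_setOfPred_separable.isClosed (fun _ hσ ↦ hσ.isDensity.1.isHermitian)
    (fun _ hσ ↦ hσ.isDensity.2) hρ htrace hsep

end Separable

theorem stmt10_general (m n : ℕ) (ρ : Matrix (Fin m × Fin n) (Fin m × Fin n) ℂ)
    (hρ : ρ.IsHermitian) (htrace : ρ.trace = 1) :
    (Separable ρ ↔
      ∀ A : Matrix (Fin m × Fin n) (Fin m × Fin n) ℂ, A.IsHermitian →
        (∀ (P : Matrix (Fin m) (Fin m) ℂ) (Q : Matrix (Fin n) (Fin n) ℂ),
          IsProjection P → IsProjection Q → 0 ≤ ((A * (P ⊗ₖ Q)).trace).re) →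
        0 ≤ ((A * ρ).trace).re) ∧
    (¬ Separable ρ ↔
      ∃ A : Matrix (Fin m × Fin n) (Fin m × Fin n) ℂ, A.IsHermitian ∧
        (∀ σ : Matrix (Fin m × Fin n) (Fin m × Fin n) ℂ,
          IsDensity σ → Separable σ → 0 ≤ ((A * σ).trace).re) ∧
        ((A * ρ).trace).re < 0) := by
  refine ⟨⟨fun hsep A _ hA ↦ forall_isProjection_expectation_nonneg_iff.1 hA ρ hsep,
    fun h ↦ ?_⟩, fun hsep ↦ ?_, ?_⟩
  · by_contra hsep
    obtain ⟨A, hA, hA_sep, hneg⟩ :=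
      exists_isHermitian_expectation_neg_of_not_separable hρ htrace hsep
    exact hneg.not_ge (h A hA (forall_isProjection_expectation_nonneg_iff.2 hA_sep))
  · obtain ⟨A, hA, hA_sep, hneg⟩ :=
      exists_isHermitian_expectation_neg_of_not_separable hρ htrace hsep
    exact ⟨A, hA, fun σ _ ↦ hA_sep σ, hneg⟩
  · rintro ⟨A, -, hA_sep, hneg⟩ hsep
    exact hneg.not_ge (hA_sep ρ hsep.isDensity hsep)

/-- The Horodecki entanglement-witness characterization: `ρ` is separable iff
`Tr(Aρ) ≥ 0` for every Hermitian `A` with `Tr(A(P ⊗ Q)) ≥ 0` for all projections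
`P`, `Q`; equivalently, `ρ` is entangled iff there is an entanglement witness for it. -/
theorem stmt10 (m n : ℕ) (ρ : Matrix (Fin m × Fin n) (Fin m × Fin n) ℂ)
    (hρ : IsDensity ρ) :
    (Separable ρ ↔
      ∀ A : Matrix (Fin m × Fin n) (Fin m × Fin n) ℂ, A.IsHermitian →
        (∀ (P : Matrix (Fin m) (Fin m) ℂ) (Q : Matrix (Fin n) (Fin n) ℂ),
          IsProjection P → IsProjection Q → 0 ≤ ((A * (P ⊗ₖ Q)).trace).re) →
        0 ≤ ((A * ρ).trace).re) ∧
    (¬ Separable ρ ↔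
      ∃ A : Matrix (Fin m × Fin n) (Fin m × Fin n) ℂ, A.IsHermitian ∧
        (∀ σ : Matrix (Fin m × Fin n) (Fin m × Fin n) ℂ,
          IsDensity σ → Separable σ → 0 ≤ ((A * σ).trace).re) ∧
        ((A * ρ).trace).re < 0) := by
  exact stmt10_general m n ρ hρ.1.isHermitian hρ.2
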